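/- arXiv:1108.2147 — 2 statements merged into one kernel-verified Lean document; each statement's English description precedes it below -/
import Mathlib

section
/- Let f, g ∈ A(S) be weakly equivalent p.m.p. actions of F_S, let r > 0 be an integer, δ > 0, and let X = L_1 ∪ ⋯ ∪ L_n ∪ E be a finite Borel partition such that μ(E) < δ, the relation ~^f_x (defined on W^{r,S} by w_1 ~^f_x w_2 iff f_{w_1}(x) = f_{w_2}(x)) is the same equivalence relation P_i for all x ∈ L_i, and f_{w_1}(L_i) ∩ f_{w_2}(L_i) = ∅ whenever w_1, w_2 ∈ W^{r,S} are not P_i-equivalent. Fix an equivalence relation κ on W^{r,S} and let T(κ, f) = {x ∈ X : ~^f_x = κ} and T(κ, g) = {x ∈ X : ~^g_x = κ}. For ρ > 0, call a finite Borel partition X = L^ρ_1 ∪ ⋯ ∪ L^ρ_n ∪ E^ρ a ρ-simulation if |μ(L_i) − μ(L^ρ_i)| < ρ for all i and |μ(f_{w_1}(L_i) ∩ f_{w_2}(L_j)) − μ(g_{w_1}(L^ρ_i) ∩ g_{w_2}(L^ρ_j))| < ρ for all 1 ≤ i, j ≤ n and all w_1, w_2 ∈ W^{r,S}. Then for every ε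 > 0 there exists ρ_0 > 0 such that for every 0 < ρ < ρ_0 and every ρ-simulation, μ( (⋃_{i : L_i ⊆ T(κ,f)} L^ρ_i) \ T(κ, g) ) ≤ 3δ + ε. -/
open MeasureTheory

/-- A probability-measure-preserving action of a group `G` on a measure space. -/
structure PMP (G : Type*) [Group G] (X : Type*) [MeasurableSpace X] (μ : Measure X) where
  act : G → X → X
  measurable : ∀ γ, Measurable (act γ)
  preserves : ∀ γ, MeasurePreserving (act γ) μ μ
  act_one : ∀ x, act 1 x = x
  act_mul : ∀ γ₁ γ₂ x, act (γ₁ * γ₂) x = act γ₁ (act γ₂ x)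

/-- `f` weakly contains `g`. -/
def WeaklyContains {G : Type*} [Group G] {X Y : Type*} [MeasurableSpace X] [MeasurableSpace Y]
    {μ : Measure X} {ν : Measure Y} (f : PMP G X μ) (g : PMP G Y ν) : Prop :=
  ∀ n : ℕ, 1 ≤ n → ∀ C : Y → Fin n, Measurable C →
    ∀ F : Finset G, ∀ ε : ℝ, 0 < ε →
      ∃ D : X → Fin n, Measurable D ∧
        ∀ i j : Fin n, ∀ γ ∈ F,
          |(μ (f.act γ '' (D ⁻¹' {i}) ∩ D ⁻¹' {j})).toReal -
            (ν (g.act γ '' (C ⁻¹' {i}) ∩ C ⁻¹' {j})).toReal| ≤ ε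

/-- Weak equivalence of p.m.p. actions. -/
def WeaklyEquivalent {G : Type*} [Group G] {X Y : Type*} [MeasurableSpace X] [MeasurableSpace Y]
    {μ : Measure X} {ν : Measure Y} (f : PMP G X μ) (g : PMP G Y ν) : Prop :=
  WeaklyContains f g ∧ WeaklyContains g f

/-- The set `W^{r,S}` of reduced words of length at most `r` in the free group on `S`. -/
def Wball (S : Type) [DecidableEq S] (r : ℕ) : Set (FreeGroup S) := {w | FreeGroup.norm w ≤ r}

/-- The set of points of `X` whose `r`-type with respect to the action `f` is the
equivalence relation `κ` on `W^{r,S}`. -/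
def typeSet {S X : Type} [DecidableEq S] [MeasurableSpace X] {μ : Measure X}
    (f : PMP (FreeGroup S) X μ) (r : ℕ) (κ : Wball S r → Wball S r → Prop) : Set X :=
  {x | ∀ w₁ w₂ : Wball S r, f.act ↑w₁ x = f.act ↑w₂ x ↔ κ w₁ w₂}

lemma PMP.image_eq {G X : Type*} [Group G] [MeasurableSpace X] {μ : Measure X}
    (f : PMP G X μ) (γ : G) (A : Set X) : f.act γ '' A = f.act γ⁻¹ ⁻¹' A := by
  ext x
  constructor
  · rintro ⟨y, hy, rfl⟩
    simpa [← f.act_mul, f.act_one] using hy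
  · intro hx
    exact ⟨f.act γ⁻¹ x, hx, by simp [← f.act_mul, f.act_one]⟩

lemma PMP.measurable_image {G X : Type*} [Group G] [MeasurableSpace X] {μ : Measure X}
    (f : PMP G X μ) (γ : G) {A : Set X} (hA : MeasurableSet A) :
    MeasurableSet (f.act γ '' A) := by
  rw [f.image_eq]; exact f.measurable _ hA

lemma PMP.measure_image {G X : Type*} [Group G] [MeasurableSpace X] {μ : Measure X}
    (f : PMP G X μ) (γ : G) {A : Set X} (hA : MeasurableSet A) :
    μ.real (f.act γ '' A) = μ.real A := by
  rw [f.image_eq, measureReal_def, (f.preserves γ⁻¹).measure_preimage hA.nullMeasurableSet,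
    measureReal_def]

/-- Weak containment, with an arbitrary finite colour set. -/
lemma WeaklyContains.fintype {G : Type*} [Group G] {X Y : Type*} [MeasurableSpace X]
    [MeasurableSpace Y] {μ : Measure X} {ν : Measure Y} {f : PMP G X μ} {g : PMP G Y ν}
    (h : WeaklyContains f g) {ι : Type*} [Fintype ι] [Nonempty ι] [MeasurableSpace ι]
    [DiscreteMeasurableSpace ι]
    (C : Y → ι) (hC : Measurable C) (F : Finset G) (ε : ℝ) (hε : 0 < ε) :
    ∃ D : X → ι, Measurable D ∧ ∀ i j : ι, ∀ γ ∈ F,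
      |μ.real (f.act γ '' (D ⁻¹' {i}) ∩ D ⁻¹' {j}) -
        ν.real (g.act γ '' (C ⁻¹' {i}) ∩ C ⁻¹' {j})| ≤ ε := by
  let e := Fintype.equivFin ι
  obtain ⟨D, hD, H⟩ := h (Fintype.card ι) Fintype.card_pos (e ∘ C)
    ((measurable_of_countable e).comp hC) F ε hε
  refine ⟨e.symm ∘ D, (measurable_of_countable e.symm).comp hD, fun i j γ hγ => ?_⟩
  have key := H (e i) (e j) γ hγ
  have h1 : ∀ i, (e.symm ∘ D) ⁻¹' {i} = D ⁻¹' {e i} := by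
    intro i; ext x; simp [Equiv.symm_apply_eq]
  have h2 : ∀ i, (e ∘ C) ⁻¹' {e i} = C ⁻¹' {i} := by
    intro i; ext x; simp
  rw [h2, h2] at key
  rw [h1, h1]
  exact key

/-- The measure of the common fixed set of finitely many elements is monotone under weak
containment. -/
lemma fix_mono {G : Type*} [Group G] {X : Type} [MeasurableSpace X] [StandardBorelSpace X]
    {μ : Measure X} [IsProbabilityMeasure μ] {f g : PMP G X μ} (h : WeaklyContains f g)
    (F : Finset G) :
    μ.real {x | ∀ γ ∈ F, f.act γ x = x} ≤ μ.real {x | ∀ γ ∈ F, g.act γ x = x} := by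
  classical
  obtain ⟨A, hAm, hA⟩ := exists_seq_separating X (p := MeasurableSet) MeasurableSet.univ Set.univ
  let T : ℕ → Set X := fun N => {x | ∀ k < N, ∀ γ ∈ F, (x ∈ A k ↔ g.act γ x ∈ A k)}
  have hTm : ∀ N, MeasurableSet (T N) := by
    intro N
    have : T N = ⋂ k, ⋂ (_ : k < N), ⋂ γ ∈ F,
        ((A k ∩ g.act γ ⁻¹' A k) ∪ ((A k)ᶜ ∩ (g.act γ ⁻¹' A k)ᶜ)) := by
      ext x
      simp only [T, Set.mem_ofPred_eq, Set.mem_iInter, Set.mem_union, Set.mem_inter_iff,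
        Set.mem_compl_iff, Set.mem_preimage]
      refine forall_congr' fun k => forall_congr' fun _ => forall_congr' fun γ =>
        forall_congr' fun _ => ?_
      tauto
    rw [this]
    refine MeasurableSet.iInter fun k => MeasurableSet.iInter fun _ =>
      F.measurableSet_biInter fun γ _ => ?_
    have h1 := hAm k
    have h2 := g.measurable γ (hAm k)
    exact (h1.inter h2).union (h1.compl.inter h2.compl)
  have hTanti : Antitone T := fun a b hab x hx k hk γ hγ => hx k (hk.trans_le hab) γ hγ
  have hTI : ⋂ N, T N = {x | ∀ γ ∈ F, g.act γ x = x} := by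
    ext x
    simp only [T, Set.mem_iInter, Set.mem_ofPred_eq]
    constructor
    · intro hx γ hγ
      exact (hA x trivial _ trivial fun k => hx (k + 1) k (Nat.lt_succ_self k) γ hγ).symm
    · intro hx N k _ γ hγ
      rw [hx γ hγ]
  have hlim : Filter.Tendsto (fun N => μ.real (T N)) Filter.atTop
      (nhds (μ.real {x | ∀ γ ∈ F, g.act γ x = x})) := by
    rw [← hTI]
    exact (ENNReal.tendsto_toReal (measure_ne_top _ _)).comp
      (tendsto_measure_iInter_atTop (fun i => (hTm i).nullMeasurableSet) hTanti
        ⟨0, measure_ne_top _ _⟩)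
  refine ge_of_tendsto' hlim fun N => ?_
  -- the colouring
  let ι := (Fin N → Bool) × (F → Fin N → Bool)
  let C : X → ι := fun x => (fun k => decide (x ∈ A k), fun γ k => decide (g.act γ x ∈ A k))
  have hdec : ∀ k, Measurable fun x => decide (x ∈ A k) := by
    intro k
    refine measurable_to_bool ?_
    convert! hAm k
    ext x; simp
  have hC : Measurable C := by
    refine Measurable.prodMk (measurable_pi_lambda _ fun k => hdec k)
      (measurable_pi_lambda _ fun γ => measurable_pi_lambda _ fun k => ?_)
    exact (hdec k).comp (g.measurable γ)
  refine le_of_forall_pos_le_add fun ε hε => ?_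
  have hcard : (0 : ℝ) < Fintype.card ι := by exact_mod_cast Fintype.card_pos
  obtain ⟨D, hD, H⟩ := h.fintype C hC (insert 1 F) (ε / Fintype.card ι) (by positivity)
  set U := {x | ∀ γ ∈ F, f.act γ x = x} with hU
  have hone : ∀ (f : PMP G X μ) (s : Set X), f.act 1 '' s = s := by
    intro f s
    have : f.act 1 = id := funext f.act_one
    rw [this, Set.image_id]
  have key : ∀ v : ι, μ.real (U ∩ D ⁻¹' {v}) ≤ μ.real (T N ∩ C ⁻¹' {v}) + ε / Fintype.card ι := by
    intro v
    by_cases hv : ∀ γ, v.2 γ = v.1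
    · have hsub : C ⁻¹' {v} ⊆ T N := by
        rintro x rfl k hk γ hγ
        have := congrFun (hv ⟨γ, hγ⟩) ⟨k, hk⟩
        simpa [C, eq_comm] using this
      rw [Set.inter_eq_self_of_subset_right hsub]
      have h1 := H v v 1 (Finset.mem_insert_self _ _)
      rw [hone, hone, Set.inter_self, Set.inter_self] at h1
      have h2 : μ.real (U ∩ D ⁻¹' {v}) ≤ μ.real (D ⁻¹' {v}) :=
        measureReal_mono Set.inter_subset_right
      have := (abs_le.1 h1).2
      linarith
    · push Not at hv
      obtain ⟨γ, hγ⟩ := hv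
      have h0 : g.act γ '' (C ⁻¹' {v}) ∩ C ⁻¹' {v} = ∅ := by
        rw [Set.eq_empty_iff_forall_notMem]
        rintro _ ⟨⟨x, hx, rfl⟩, hy⟩
        apply hγ
        have e1 : C x = v := hx
        have e2 : C (g.act γ x) = v := hy
        rw [← congrArg Prod.snd e1, ← congrArg Prod.fst e2]
      have h1 := H v v γ (Finset.mem_insert_of_mem γ.2)
      rw [h0, measureReal_empty, sub_zero] at h1
      have h2 : μ.real (U ∩ D ⁻¹' {v}) ≤ μ.real (f.act γ '' (D ⁻¹' {v}) ∩ D ⁻¹' {v}) :=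
        measureReal_mono fun x hx => ⟨⟨x, hx.2, hx.1 γ γ.2⟩, hx.2⟩
      have h3 := (abs_le.1 h1).2
      have h4 : 0 ≤ μ.real (T N ∩ C ⁻¹' {v}) := measureReal_nonneg
      linarith
  have hsum : ∑ v, μ.real (T N ∩ C ⁻¹' {v}) = μ.real (T N) := by
    rw [← measureReal_iUnion_fintype]
    · congr 1; ext x; simp
    · intro v w hvw
      refine Set.disjoint_left.2 fun x hx hy => hvw ?_
      exact hx.2.symm.trans hy.2
    · exact fun v => (hTm N).inter (hC (measurableSet_singleton v))
  calc μ.real U ≤ μ.real (⋃ v, U ∩ D ⁻¹' {v}) := by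
        refine measureReal_mono fun x hx => ?_
        simp [hx]
    _ ≤ ∑ v, μ.real (U ∩ D ⁻¹' {v}) := measureReal_iUnion_fintype_le _
    _ ≤ ∑ v, (μ.real (T N ∩ C ⁻¹' {v}) + ε / Fintype.card ι) := Finset.sum_le_sum fun v _ => key v
    _ = μ.real (T N) + ε := by
        rw [Finset.sum_add_distrib, hsum]
        simp only [Finset.sum_const, Finset.card_univ, nsmul_eq_mul]
        rw [mul_div_cancel₀ _ hcard.ne']

lemma finite_Wball (S : Type) [Fintype S] [DecidableEq S] (r : ℕ) : Finite (Wball S r) := by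
  have h : (Wball S r).Finite := by
    have := (List.finite_length_le (S × Bool) r).preimage
      (f := FreeGroup.toWord (α := S)) FreeGroup.toWord_injective.injOn
    exact this
  exact h

theorem simulation_measure_bound
    {S X : Type} [Fintype S] [DecidableEq S] [MeasurableSpace X] [StandardBorelSpace X]
    {μ : Measure X} [IsProbabilityMeasure μ]
    (f g : PMP (FreeGroup S) X μ) (hfg : WeaklyEquivalent f g)
    (r : ℕ) (hr : 0 < r) (δ : ℝ) (hδ : 0 < δ)
    (n : ℕ) (L : Fin n → Set X) (E : Set X)
    (hLmeas : ∀ i, MeasurableSet (L i)) (hEmeas : MeasurableSet E)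
    (hdisjL : ∀ i j, i ≠ j → Disjoint (L i) (L j)) (hdisjE : ∀ i, Disjoint (L i) E)
    (hcover : (⋃ i, L i) ∪ E = Set.univ)
    (hE : (μ E).toReal < δ)
    (P : Fin n → (Wball S r → Wball S r → Prop))
    (hP : ∀ i, ∀ x ∈ L i, ∀ w₁ w₂ : Wball S r,
      (f.act ↑w₁ x = f.act ↑w₂ x ↔ P i w₁ w₂))
    (hPdisj : ∀ i, ∀ w₁ w₂ : Wball S r, ¬ P i w₁ w₂ →
      f.act ↑w₁ '' L i ∩ f.act ↑w₂ '' L i = ∅)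
    (κ : Wball S r → Wball S r → Prop) (hκ : Equivalence κ) :
    ∀ ε : ℝ, 0 < ε → ∃ ρ₀ : ℝ, 0 < ρ₀ ∧
      ∀ ρ : ℝ, 0 < ρ → ρ < ρ₀ →
        ∀ (L' : Fin n → Set X) (E' : Set X),
          (∀ i, MeasurableSet (L' i)) → MeasurableSet E' →
          (∀ i j, i ≠ j → Disjoint (L' i) (L' j)) → (∀ i, Disjoint (L' i) E') →
          ((⋃ i, L' i) ∪ E' = Set.univ) →
          (∀ i, |(μ (L i)).toReal - (μ (L' i)).toReal| < ρ) →
          (∀ i j, ∀ w₁ w₂ : Wball S r,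
            |(μ (f.act ↑w₁ '' L i ∩ f.act ↑w₂ '' L j)).toReal -
              (μ (g.act ↑w₁ '' L' i ∩ g.act ↑w₂ '' L' j)).toReal| < ρ) →
          (μ ((⋃ i ∈ {i : Fin n | L i ⊆ typeSet f r κ}, L' i) \ typeSet g r κ)).toReal
            ≤ 3 * δ + ε := by
  classical
  intro ε hε
  have := finite_Wball S r
  have := Fintype.ofFinite (Wball S r)
  set M : ℝ := ((Fintype.card (Wball S r × Wball S r) : ℕ) : ℝ) with hM
  have hM0 : 0 ≤ M := Nat.cast_nonneg _
  set K : ℝ := 2 * (n * M) + 3 * n + 1 with hK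
  have hK0 : 0 < K := by positivity
  refine ⟨ε / K, by positivity, ?_⟩
  intro ρ hρ hρ0 L' E' hL'm hE'm hdL' hdE' hcov' hLL hsim
  change ∀ i, |μ.real (L i) - μ.real (L' i)| < ρ at hLL
  change μ.real E < δ at hE
  change μ.real _ ≤ _
  have hKρ : ρ * K ≤ ε := by
    rw [lt_div_iff₀ hK0] at hρ0; exact hρ0.le
  -- the common fixed sets
  let F : Finset (FreeGroup S) :=
    (Finset.univ.filter fun p : Wball S r × Wball S r => κ p.1 p.2).image
      fun p => (p.2 : FreeGroup S)⁻¹ * p.1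
  have hfix : ∀ (a : PMP (FreeGroup S) X μ),
      {x | ∀ γ ∈ F, a.act γ x = x} =
        {x | ∀ w₁ w₂ : Wball S r, κ w₁ w₂ → a.act ↑w₁ x = a.act ↑w₂ x} := by
    intro a
    have haux : ∀ (w₁ w₂ : FreeGroup S) x, a.act (w₂⁻¹ * w₁) x = x ↔ a.act w₁ x = a.act w₂ x := by
      intro w₁ w₂ x
      constructor
      · intro h
        have := congrArg (a.act w₂) h
        rwa [← a.act_mul, mul_inv_cancel_left] at this
      · intro h
        rw [a.act_mul, h, ← a.act_mul, inv_mul_cancel, a.act_one]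
    ext x
    simp only [Set.mem_ofPred_eq]
    constructor
    · intro h w₁ w₂ hw
      refine (haux _ _ _).1 (h _ (Finset.mem_image.2 ⟨(w₁, w₂), by simpa using hw, rfl⟩))
    · intro h γ hγ
      obtain ⟨p, hp, rfl⟩ := Finset.mem_image.1 hγ
      exact (haux _ _ _).2 (h _ _ (by simpa using hp))
  have hmono := fix_mono hfg.1 F
  rw [hfix, hfix] at hmono
  set V := {x | ∀ w₁ w₂ : Wball S r, κ w₁ w₂ → g.act ↑w₁ x = g.act ↑w₂ x} with hV
  -- measurability
  let N : Set X := ⋃ i : Fin n, ⋃ p : Wball S r × Wball S r,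
    {x | ¬ P i p.1 p.2 ∧ x ∈ L' i ∧ g.act ↑p.1 x = g.act ↑p.2 x}
  have hN : μ.real N ≤ n * M * ρ := by
    have h1 : ∀ (i : Fin n) (p : Wball S r × Wball S r),
        μ.real {x | ¬ P i p.1 p.2 ∧ x ∈ L' i ∧ g.act ↑p.1 x = g.act ↑p.2 x} ≤ ρ := by
      intro i p
      by_cases hp : P i p.1 p.2
      · simp [hp, hρ.le]
      have h2 := hsim i i p.1 p.2
      rw [hPdisj i _ _ hp] at h2
      change |μ.real ∅ - μ.real _| < ρ at h2
      rw [measureReal_empty, zero_sub, abs_neg, abs_of_nonneg measureReal_nonneg] at h2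
      refine le_trans ?_ h2.le
      have hm := (g.measurable_image p.1 (hL'm i)).inter (g.measurable_image p.2 (hL'm i))
      have h3 := (g.preserves (p.1 : FreeGroup S)).measure_preimage hm.nullMeasurableSet
      have h4 := congrArg ENNReal.toReal h3
      change μ.real _ = μ.real _ at h4
      rw [← h4]
      refine measureReal_mono ?_
      rintro x ⟨-, hx, hxe⟩
      exact ⟨⟨x, hx, rfl⟩, ⟨x, hx, hxe.symm⟩⟩
    calc μ.real N ≤ ∑ i : Fin n, ∑ p : Wball S r × Wball S r, ρ := by
          refine (measureReal_iUnion_fintype_le _).trans (Finset.sum_le_sum fun i _ => ?_)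
          exact (measureReal_iUnion_fintype_le _).trans (Finset.sum_le_sum fun p _ => h1 i p)
      _ = n * M * ρ := by
          simp only [Finset.sum_const, Finset.card_univ, nsmul_eq_mul, Fintype.card_fin, hM]
          ring
  let Z : Set X := ⋃ i : Fin n, {x | x ∈ L' i ∧ L i = ∅}
  have hZ : μ.real Z ≤ n * ρ := by
    calc μ.real Z ≤ ∑ i : Fin n, ρ := by
          refine (measureReal_iUnion_fintype_le _).trans (Finset.sum_le_sum fun i _ => ?_)
          by_cases hi : L i = ∅
          · have := (abs_lt.1 (hLL i)).1
            rw [hi, measureReal_empty] at this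
            simp only [hi, and_true, Set.ofPred_mem_eq]
            linarith
          · simp [hi, hρ.le]
      _ = n * ρ := by simp
  let J : Finset (Fin n) := Finset.univ.filter fun i => ∀ w₁ w₂, κ w₁ w₂ → P i w₁ w₂
  -- sums over families
  have hsumL : ∀ s : Finset (Fin n), μ.real (⋃ i ∈ s, L i) = ∑ i ∈ s, μ.real (L i) := fun s =>
    measureReal_biUnion_finset (fun i _ j _ hij => hdisjL i j hij) (fun i _ => hLmeas i)
  have hsumL' : ∀ s : Finset (Fin n), μ.real (⋃ i ∈ s, L' i) = ∑ i ∈ s, μ.real (L' i) := fun s =>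
    measureReal_biUnion_finset (fun i _ j _ hij => hdL' i j hij) (fun i _ => hL'm i)
  have hcomp : ∀ s : Finset (Fin n),
      |∑ i ∈ s, μ.real (L i) - ∑ i ∈ s, μ.real (L' i)| ≤ n * ρ := by
    intro s
    rw [← Finset.sum_sub_distrib]
    refine (Finset.abs_sum_le_sum_abs _ _).trans ?_
    refine (Finset.sum_le_sum (g := fun _ => ρ) fun i _ => (hLL i).le).trans ?_
    rw [Finset.sum_const, nsmul_eq_mul]
    have : s.card ≤ n := by simpa using Finset.card_le_univ s
    gcongr
  have hE' : μ.real E' ≤ δ + n * ρ := by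
    have a1 : μ.real (⋃ i, L i) + μ.real E = 1 := by
      rw [← measureReal_union (Set.disjoint_iUnion_left.2 hdisjE) hEmeas, hcover]
      simp
    have a2 : μ.real (⋃ i, L' i) + μ.real E' = 1 := by
      rw [← measureReal_union (Set.disjoint_iUnion_left.2 hdE') hE'm, hcov']
      simp
    have b1 := hsumL Finset.univ
    have b2 := hsumL' Finset.univ
    simp only [Finset.mem_univ, Set.iUnion_true] at b1 b2
    have := (abs_le.1 (hcomp Finset.univ)).2
    linarith
  set A' := ⋃ i ∈ J, L' i with hA'
  have hA'm : MeasurableSet A' := J.measurableSet_biUnion fun i _ => hL'm i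
  have hVA : μ.real V ≤ μ.real (V ∩ A') + μ.real E' + μ.real N := by
    refine le_trans (measureReal_mono (s₂ := (V ∩ A') ∪ E' ∪ N) ?_) ?_
    · intro x hx
      have hx' : x ∈ (⋃ i, L' i) ∪ E' := hcov' ▸ Set.mem_univ x
      rcases hx' with hx' | hx'
      · obtain ⟨i, hi⟩ := Set.mem_iUnion.1 hx'
        by_cases hiJ : i ∈ J
        · exact Or.inl (Or.inl ⟨hx, Set.mem_biUnion hiJ hi⟩)
        · simp only [J, Finset.mem_filter, Finset.mem_univ, true_and] at hiJ
          push Not at hiJ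
          obtain ⟨w₁, w₂, hw, hPw⟩ := hiJ
          refine Or.inr (Set.mem_iUnion.2 ⟨i, Set.mem_iUnion.2 ⟨(w₁, w₂), hPw, hi, hx _ _ hw⟩⟩)
      · exact Or.inl (Or.inr hx')
    · refine (measureReal_union_le _ _).trans ?_
      gcongr
      exact measureReal_union_le _ _
  have hVm : MeasurableSet V := by
    have : V = ⋂ w₁ : Wball S r, ⋂ w₂ : Wball S r, ⋂ _ : κ w₁ w₂,
        {x | g.act ↑w₁ x = g.act ↑w₂ x} := by
      ext x; simp [hV]
    rw [this]
    exact MeasurableSet.iInter fun w₁ => MeasurableSet.iInter fun w₂ => MeasurableSet.iInter fun _ =>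
      measurableSet_eq_fun (g.measurable _) (g.measurable _)
  have hsplit : μ.real (A' \ V) + μ.real (A' ∩ V) = μ.real A' := measureReal_sdiff_add_inter hVm (measure_ne_top _ _)
  have hAU : μ.real (⋃ i ∈ J, L i) ≤
      μ.real {x | ∀ w₁ w₂ : Wball S r, κ w₁ w₂ → f.act ↑w₁ x = f.act ↑w₂ x} := by
    refine measureReal_mono fun x hx => ?_
    obtain ⟨i, hiJ, hi⟩ := Set.mem_iUnion₂.1 hx
    intro w₁ w₂ hw
    exact (hP i x hi w₁ w₂).2 ((Finset.mem_filter.1 hiJ).2 w₁ w₂ hw)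
  have hB : μ.real ((⋃ i ∈ {i : Fin n | L i ⊆ typeSet f r κ}, L' i) \ typeSet g r κ) ≤
      μ.real (A' \ V) + μ.real N + μ.real Z := by
    refine le_trans (measureReal_mono (s₂ := (A' \ V) ∪ N ∪ Z) ?_) ?_
    · rintro x ⟨hx, hxT⟩
      obtain ⟨i, hi, hxi⟩ := Set.mem_iUnion₂.1 hx
      rcases Set.eq_empty_or_nonempty (L i) with he | ⟨y, hy⟩
      · exact Or.inr (Set.mem_iUnion.2 ⟨i, hxi, he⟩)
      have hPκ : ∀ w₁ w₂, P i w₁ w₂ ↔ κ w₁ w₂ := fun w₁ w₂ =>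
        (hP i y hy w₁ w₂).symm.trans (hi hy w₁ w₂)
      left
      by_cases hxV : x ∈ V
      · right
        have : ∃ w₁ w₂ : Wball S r, ¬ (g.act ↑w₁ x = g.act ↑w₂ x ↔ κ w₁ w₂) := by
          by_contra hcon
          push Not at hcon
          exact hxT hcon
        obtain ⟨w₁, w₂, hw⟩ := this
        have hnk : ¬ κ w₁ w₂ := fun hk => hw ⟨fun _ => hk, fun _ => hxV _ _ hk⟩
        have heq : g.act ↑w₁ x = g.act ↑w₂ x := by
          by_contra hne
          exact hw ⟨fun h => absurd h hne, fun h => absurd h hnk⟩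
        exact Set.mem_iUnion.2 ⟨i, Set.mem_iUnion.2
          ⟨(w₁, w₂), fun h => hnk ((hPκ _ _).1 h), hxi, heq⟩⟩
      · left
        refine ⟨Set.mem_biUnion ?_ hxi, hxV⟩
        exact Finset.mem_filter.2 ⟨Finset.mem_univ _, fun w₁ w₂ h => (hPκ _ _).2 h⟩
    · refine (measureReal_union_le _ _).trans ?_
      gcongr
      exact measureReal_union_le _ _
  have hJ := (abs_le.1 (hcomp J)).1
  rw [← hsumL, ← hsumL'] at hJ
  rw [Set.inter_comm] at hVA
  have hexp : ρ * K = 2 * (n * M * ρ) + 3 * (n * ρ) + ρ := by rw [hK]; ring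
  linarith
end

section
/- Let Γ be a group generated by a finite set S and let f be a free p.m.p. action of Γ on a standard Borel probability space (X, μ). Then there exists a p.m.p. action g of Γ on (X, μ) that is weakly equivalent to f and combinatorially rigid: for every r, k ≥ 1 and every (r,k)-rule L, if g almost satisfies L then g properly satisfies L. -/
open MeasureTheory

/-- The action `f` is (essentially) free. -/
def IsFreeAction {G : Type*} [Group G] {X : Type*} [MeasurableSpace X] {μ : Measure X}
    (f : PMP G X μ) : Prop :=
  ∀ᵐ x ∂μ, ∀ γ : G, f.act γ x = x → γ = 1

/-- The ball of radius `r` around the identity in the Cayley graph `Cay(Γ, S)`. -/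
def cayleyBall {Γ : Type*} [Group Γ] (S : Finset Γ) (r : ℕ) : Set Γ :=
  {γ | ∃ l : List Γ, l.length ≤ r ∧ (∀ x ∈ l, x ∈ S ∨ x⁻¹ ∈ S) ∧ l.prod = γ}

/-- The `k`-coloring of the `r`-ball around `x` induced by `φ` and the action `f`. -/
def ballColoring {Γ X : Type*} [Group Γ] [MeasurableSpace X] {μ : Measure X}
    (f : PMP Γ X μ) (S : Finset Γ) (r k : ℕ) (φ : X → Fin k) (x : X) :
    cayleyBall S r → Fin k :=
  fun γ => φ (f.act ↑γ x)

/-- `φ` is an `(ε, L)`-good coloring for the action `f`. -/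
def GoodColoring {Γ X : Type*} [Group Γ] [MeasurableSpace X] {μ : Measure X}
    (f : PMP Γ X μ) (S : Finset Γ) {r k : ℕ} (L : Set (cayleyBall S r → Fin k))
    (ε : ℝ) (φ : X → Fin k) : Prop :=
  Measurable φ ∧ 1 - ε ≤ (μ {x | ballColoring f S r k φ x ∈ L}).toReal

/-- The action `f` almost satisfies the rule `L`. -/
def AlmostSatisfies {Γ X : Type*} [Group Γ] [MeasurableSpace X] {μ : Measure X}
    (f : PMP Γ X μ) (S : Finset Γ) {r k : ℕ} (L : Set (cayleyBall S r → Fin k)) : Prop :=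
  ∀ ε : ℝ, 0 < ε → ∃ φ : X → Fin k, GoodColoring f S L ε φ

/-- The action `f` properly satisfies the rule `L`. -/
def ProperlySatisfies {Γ X : Type*} [Group Γ] [MeasurableSpace X] {μ : Measure X}
    (f : PMP Γ X μ) (S : Finset Γ) {r k : ℕ} (L : Set (cayleyBall S r → Fin k)) : Prop :=
  ∃ φ : X → Fin k, Measurable φ ∧ μ {x | ballColoring f S r k φ x ∈ L} = 1

open Set Filter Topology ProbabilityTheory ENNReal

section Iso

/-- Lebesgue measure on the open unit interval. -/
noncomputable def CRvol : Measure (Ioo (0:ℝ) 1) := Measure.comap Subtype.val volume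

/-- An embedding that is measure preserving can be upgraded to a measurable equivalence. -/
lemma CR_upgrade {A B : Type*} [MeasurableSpace A] [StandardBorelSpace A]
    [MeasurableSpace B] [StandardBorelSpace B] {α : Measure A} {β : Measure B}
    (i : A → B) (hi : MeasurableEmbedding i) (hmp : MeasurePreserving i α β)
    (P : Set A) (hP : MeasurableSet P) (hnull : α Pᶜ = 0) (hunc : ¬ Pᶜ.Countable) :
    ∃ e : A ≃ᵐ B, MeasurePreserving e α β := by
  classical
  have hW : MeasurableSet (i '' P) := hi.measurableSet_image.2 hP
  have hWunc : ¬ ((i '' P)ᶜ).Countable := by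
    intro h
    apply hunc
    have : i '' Pᶜ ⊆ (i '' P)ᶜ := Set.image_compl_subset hi.injective
    exact Set.countable_of_injective_of_countable_image hi.injective.injOn (h.mono this)
  have := hW.compl.standardBorel
  have := hP.compl.standardBorel
  let e1 : P ≃ᵐ (i '' P : Set B) := hi.equivImage P
  let e2 : (Pᶜ : Set A) ≃ᵐ ((i '' P)ᶜ : Set B) :=
    PolishSpace.measurableEquivOfNotCountable hunc hWunc
  let e : A ≃ᵐ B := (MeasurableEquiv.sumCompl hP).symm.trans
    ((MeasurableEquiv.sumCongr e1 e2).trans (MeasurableEquiv.sumCompl hW))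
  refine ⟨e, e.measurable, ?_⟩
  rw [← hmp.map_eq]
  apply Measure.map_congr
  have hPae : ∀ᵐ x ∂α, x ∈ P := hnull
  filter_upwards [hPae] with x hx
  have h1 : (MeasurableEquiv.sumCompl hP).symm x = Sum.inl ⟨x, hx⟩ := by
    rw [MeasurableEquiv.symm_apply_eq]; rfl
  change (MeasurableEquiv.sumCompl hW) ((MeasurableEquiv.sumCongr e1 e2)
    ((MeasurableEquiv.sumCompl hP).symm x)) = i x
  rw [h1]
  rfl

lemma CR_null_uncountable {A : Type*} [MeasurableSpace A] [StandardBorelSpace A]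
    (α : Measure A) [IsFiniteMeasure α] (hA : ¬ Countable A) :
    ∃ P : Set A, MeasurableSet P ∧ α Pᶜ = 0 ∧ ¬ Pᶜ.Countable := by
  have hR : ¬ Countable (ℝ × ℝ) := by
    intro h
    have : Countable ℝ := Function.Injective.countable (f := fun x : ℝ => (x, (0:ℝ)))
      (fun a b h => congrArg Prod.fst h)
    exact not_countable (α := ℝ) this
  let e := PolishSpace.measurableEquivOfNotCountable hA hR
  let As : ℝ → Set A := fun a => {x | (e x).1 = a}
  have hm : ∀ a, MeasurableSet (As a) := fun a =>
    (measurable_fst.comp e.measurable) (measurableSet_singleton a)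
  have hd : Pairwise (Function.onFun Disjoint As) := by
    intro a b hab
    rw [Function.onFun, Set.disjoint_left]
    intro x hx hx'
    exact hab (hx.symm.trans hx')
  have hc := Measure.countable_meas_pos_of_disjoint_iUnion (μ := α) hm hd
  have : ∃ a, ¬ (0 < α (As a)) := by
    by_contra! h
    have : {i | 0 < α (As i)} = Set.univ := by ext; simpa using h _
    rw [this] at hc
    exact Set.not_countable_univ hc
  obtain ⟨a, ha⟩ := this
  refine ⟨(As a)ᶜ, (hm a).compl, by simpa using ha, ?_⟩
  rw [compl_compl]
  intro h
  have : (e '' (As a)).Countable := h.image e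
  have h2 : (Prod.snd '' (e '' (As a))).Countable := this.image _
  have : Prod.snd '' (e '' (As a)) = Set.univ := by
    ext y
    simp only [Set.mem_univ, iff_true]
    exact ⟨(a, y), ⟨e.symm (a, y), by simp [As], by simp⟩, rfl⟩
  rw [this] at h2
  exact Set.not_countable_univ h2

lemma CR_cdf_cont (μ : Measure ℝ) [IsProbabilityMeasure μ] [NullSingletonClass μ] : Continuous (cdf μ) := by
  rw [continuous_iff_continuousAt]
  intro a
  rw [(monotone_cdf μ).continuousAt_iff_leftLim_eq_rightLim]
  have h := (cdf μ).measure_singleton a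
  rw [measure_cdf, measure_singleton, eq_comm, ENNReal.ofReal_eq_zero] at h
  rw [(cdf μ).rightLim_eq]
  exact le_antisymm ((monotone_cdf μ).leftLim_le le_rfl) (by linarith)

lemma CR_quantile (μ : Measure ℝ) [IsProbabilityMeasure μ] [NullSingletonClass μ] :
    ∃ Q : Ioo (0:ℝ) 1 → ℝ, MeasurableEmbedding Q ∧ MeasurePreserving Q CRvol μ := by
  have hex : ∀ t : Ioo (0:ℝ) 1, ∃ x, cdf μ x = t := by
    intro t
    have h1 : ∃ x, cdf μ x < t := ((tendsto_cdf_atBot μ).eventually (gt_mem_nhds t.2.1)).exists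
    have h2 : ∃ x, (t:ℝ) < cdf μ x := ((tendsto_cdf_atTop μ).eventually (lt_mem_nhds t.2.2)).exists
    obtain ⟨a, ha⟩ := h1
    obtain ⟨b, hb⟩ := h2
    exact mem_range_of_exists_le_of_exists_ge (CR_cdf_cont μ) ⟨a, ha.le⟩ ⟨b, hb.le⟩
  choose Q hQ using hex
  have hmono : StrictMono Q := by
    intro s t hst
    by_contra! h
    have := monotone_cdf μ h
    rw [hQ, hQ] at this
    exact absurd hst (not_lt.2 this)
  have hmeas : Measurable Q := hmono.monotone.measurable
  have : StandardBorelSpace (Ioo (0:ℝ) 1) := measurableSet_Ioo.standardBorel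
  refine ⟨Q, hmeas.measurableEmbedding hmono.injective, hmeas, ?_⟩
  have hvol : ∀ s : Set (Ioo (0:ℝ) 1), CRvol s = volume (Subtype.val '' s : Set ℝ) := by
    intro s
    rw [CRvol, (MeasurableEmbedding.subtype_coe measurableSet_Ioo).comap_apply]
  have : IsFiniteMeasure (CRvol) := ⟨by
    rw [hvol, Set.image_univ, Subtype.range_coe]; simp⟩
  have : IsFiniteMeasure (Measure.map Q CRvol) := Measure.isFiniteMeasure_map _ _
  refine Measure.ext_of_Iic _ _ fun x => ?_
  rw [Measure.map_apply hmeas measurableSet_Iic, hvol, ← ofReal_cdf μ x]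
  have h0 := cdf_nonneg μ x
  have h1 := cdf_le_one μ x
  apply le_antisymm
  · calc volume (Subtype.val '' (Q ⁻¹' Iic x) : Set ℝ) ≤ volume (Icc 0 (cdf μ x)) := by
          apply measure_mono
          rintro _ ⟨t, ht, rfl⟩
          refine ⟨t.2.1.le, ?_⟩
          rw [← hQ t]
          exact monotone_cdf μ ht
      _ = _ := by simp
  · calc ENNReal.ofReal (cdf μ x) = volume (Ioo 0 (cdf μ x)) := by simp
      _ ≤ _ := by
          apply measure_mono
          rintro t ⟨ht0, ht1⟩
          refine ⟨⟨t, ht0, ht1.trans_le h1⟩, ?_, rfl⟩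
          by_contra hc
          have hc : x < Q ⟨t, ht0, ht1.trans_le h1⟩ := not_le.1 hc
          have := monotone_cdf μ hc.le
          rw [hQ] at this
          exact absurd ht1 (not_lt.2 this)

lemma CR_not_countable {X : Type*} [MeasurableSpace X]
    (μ : Measure X) [IsProbabilityMeasure μ] [NullSingletonClass μ] : ¬ Countable X := by
  intro h
  have := (Set.countable_univ (α := X)).measure_zero μ
  simp at this

lemma CR_iso_unit {X : Type*} [MeasurableSpace X] [StandardBorelSpace X]
    (μ : Measure X) [IsProbabilityMeasure μ] [NullSingletonClass μ] :
    ∃ e : Ioo (0:ℝ) 1 ≃ᵐ X, MeasurePreserving e CRvol μ := by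
  have : StandardBorelSpace (Ioo (0:ℝ) 1) := measurableSet_Ioo.standardBorel
  let j : X ≃ᵐ ℝ := PolishSpace.measurableEquivOfNotCountable (CR_not_countable μ)
    (not_countable (α := ℝ))
  have : IsProbabilityMeasure (μ.map j) := Measure.isProbabilityMeasure_map j.measurable.aemeasurable
  have : NullSingletonClass (μ.map j) := ⟨fun x => by
    rw [Measure.map_apply j.measurable (measurableSet_singleton x)]
    have : j ⁻¹' {x} = {j.symm x} := by
      ext y; simp [MeasurableEquiv.eq_symm_apply]
    rw [this]; simp⟩
  obtain ⟨Q, hQ, hQm⟩ := CR_quantile (μ.map j)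
  have hI : ¬ Countable (Ioo (0:ℝ) 1) := by
    intro h
    have : (Ioo (0:ℝ) 1).Countable := h
    have h2 := this.measure_zero volume
    simp at h2
  have : IsFiniteMeasure (CRvol) := ⟨by
    have := hQm.measure_preimage (s := Set.univ) MeasurableSet.univ.nullMeasurableSet
    rw [Set.preimage_univ] at this
    rw [this]; exact measure_lt_top _ _⟩
  obtain ⟨P, hP, hP0, hPc⟩ := CR_null_uncountable (CRvol) hI
  obtain ⟨e, he⟩ := CR_upgrade Q hQ hQm P hP hP0 hPc
  exact ⟨e.trans j.symm, (MeasurePreserving.symm j ⟨j.measurable, rfl⟩).comp he⟩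

lemma CR_iso {X Y : Type*} [MeasurableSpace X] [StandardBorelSpace X]
    (μ : Measure X) [IsProbabilityMeasure μ] [NullSingletonClass μ]
    [MeasurableSpace Y] [StandardBorelSpace Y]
    (ν : Measure Y) [IsProbabilityMeasure ν] [NullSingletonClass ν] :
    ∃ e : X ≃ᵐ Y, MeasurePreserving e μ ν := by
  obtain ⟨e, he⟩ := CR_iso_unit μ
  obtain ⟨e', he'⟩ := CR_iso_unit ν
  exact ⟨e.symm.trans e', he'.comp (MeasurePreserving.symm e he)⟩

end Iso

section Law

/-- Strong form of weak containment: finite-dimensional laws are approximated. -/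
def CRLaw {G : Type*} [Group G] {X Y : Type*} [MeasurableSpace X] [MeasurableSpace Y]
    {μ : Measure X} {ν : Measure Y} (f : PMP G X μ) (g : PMP G Y ν) : Prop :=
  ∀ n : ℕ, ∀ C : Y → Fin n, Measurable C → ∀ F : Finset G, ∀ ε : ℝ, 0 < ε →
    ∃ D : X → Fin n, Measurable D ∧ ∀ E : Set (F → Fin n),
      |μ.real {x | (fun γ : F => D (f.act γ x)) ∈ E} -
        ν.real {y | (fun γ : F => C (g.act γ y)) ∈ E}| ≤ ε

lemma PMP.act_inv_act {G : Type*} [Group G] {X : Type*} [MeasurableSpace X]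
    {μ : Measure X} (f : PMP G X μ) (γ : G) (x : X) : f.act γ⁻¹ (f.act γ x) = x := by
  rw [← f.act_mul, inv_mul_cancel, f.act_one]

lemma PMP.act_act_inv {G : Type*} [Group G] {X : Type*} [MeasurableSpace X]
    {μ : Measure X} (f : PMP G X μ) (γ : G) (x : X) : f.act γ (f.act γ⁻¹ x) = x := by
  rw [← f.act_mul, mul_inv_cancel, f.act_one]

lemma CR_image {G : Type*} [Group G] {X : Type*} [MeasurableSpace X]
    {μ : Measure X} (f : PMP G X μ) {n : ℕ} (D : X → Fin n) (γ : G) (i j : Fin n) :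
    f.act γ '' (D ⁻¹' {i}) ∩ D ⁻¹' {j} = {x | D (f.act γ⁻¹ x) = i ∧ D (f.act 1 x) = j} := by
  ext x
  simp only [Set.mem_inter_iff, Set.mem_image, Set.mem_preimage, Set.mem_singleton_iff,
    Set.mem_ofPred_eq, f.act_one]
  refine and_congr_left fun _ => ⟨?_, fun h => ⟨_, h, f.act_act_inv γ x⟩⟩
  rintro ⟨y, hy, rfl⟩
  rw [f.act_inv_act, hy]

lemma CRLaw.weaklyContains {G : Type*} [Group G] {X Y : Type*} [MeasurableSpace X]
    [MeasurableSpace Y] {μ : Measure X} {ν : Measure Y} {f : PMP G X μ} {g : PMP G Y ν}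
    (h : CRLaw f g) : WeaklyContains f g := by
  classical
  intro n _ C hC F ε hε
  obtain ⟨D, hD, hDE⟩ := h n C hC (insert 1 (F.image (fun γ => γ⁻¹))) ε hε
  refine ⟨D, hD, fun i j γ hγ => ?_⟩
  rw [CR_image, CR_image]
  exact hDE {c | c ⟨γ⁻¹, Finset.mem_insert_of_mem (Finset.mem_image_of_mem _ hγ)⟩ = i ∧
    c ⟨1, Finset.mem_insert_self _ _⟩ = j}

lemma CR_ball_finite {Γ : Type*} [Group Γ] (S : Finset Γ) (r : ℕ) : (cayleyBall S r).Finite := by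
  classical
  let T : Type _ := {x // x ∈ S ∪ S.image (fun x => x⁻¹)}
  have hfin : {l : List T | l.length ≤ r}.Finite := List.finite_length_le T r
  refine (hfin.image (fun l => (l.map Subtype.val).prod)).subset ?_
  rintro γ ⟨l, hl, hlS, rfl⟩
  have hmem : ∀ x ∈ l, x ∈ S ∪ S.image (fun x => x⁻¹) := by
    intro x hx
    rcases hlS x hx with h | h
    · exact Finset.mem_union_left _ h
    · exact Finset.mem_union_right _ (Finset.mem_image.2 ⟨_, h, inv_inv x⟩)
  refine ⟨l.attach.map (fun x => ⟨x.1, hmem x.1 x.2⟩), by simpa using hl, ?_⟩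
  simp [Function.comp_def]

lemma CRLaw.almostSatisfies {G : Type*} [Group G] {X Y : Type*} [MeasurableSpace X]
    [MeasurableSpace Y] {μ : Measure X} {ν : Measure Y} {f : PMP G X μ} {g : PMP G Y ν}
    (h : CRLaw f g) (S : Finset G) {r k : ℕ} (L : Set (cayleyBall S r → Fin k))
    (hL : AlmostSatisfies g S L) : AlmostSatisfies f S L := by
  intro ε hε
  obtain ⟨φ, hφ, hφL⟩ := hL (ε / 2) (by linarith)
  obtain ⟨D, hD, hDE⟩ := h k φ hφ (CR_ball_finite S r).toFinset (ε / 2) (by linarith)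
  refine ⟨D, hD, ?_⟩
  have := hDE {c | (fun γ : cayleyBall S r =>
    c ⟨γ.1, (CR_ball_finite S r).mem_toFinset.2 γ.2⟩) ∈ L}
  have h1 := (abs_le.1 this).1
  change 1 - ε / 2 ≤ ν.real {y | ballColoring g S r k φ y ∈ L} at hφL
  change 1 - ε ≤ μ.real {x | ballColoring f S r k D x ∈ L}
  change -(ε / 2) ≤ μ.real {x | ballColoring f S r k D x ∈ L} -
    ν.real {y | ballColoring g S r k φ y ∈ L} at h1
  linarith

/-- Transport of an action. -/
def CRtransport {G : Type*} [Group G] {X Y : Type*} [MeasurableSpace X] [MeasurableSpace Y]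
    {μ : Measure X} {ν : Measure Y} (g : PMP G Y ν) (e : X ≃ᵐ Y) (he : MeasurePreserving e μ ν) :
    PMP G X μ where
  act γ x := e.symm (g.act γ (e x))
  measurable γ := e.symm.measurable.comp ((g.measurable γ).comp e.measurable)
  preserves γ := (MeasurePreserving.symm e he).comp ((g.preserves γ).comp he)
  act_one x := by simp [g.act_one]
  act_mul γ₁ γ₂ x := by simp [g.act_mul]

lemma CR_real_preimage {X Y : Type*} [MeasurableSpace X] [MeasurableSpace Y]
    {μ : Measure X} {ν : Measure Y} (e : X ≃ᵐ Y) (he : MeasurePreserving e μ ν) (s : Set Y) :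
    μ.real (e ⁻¹' s) = ν.real s := by
  rw [Measure.real, Measure.real, he.measure_preimage_equiv]

lemma CRLaw.transport_right {G : Type*} [Group G] {X Y W : Type*} [MeasurableSpace X]
    [MeasurableSpace Y] [MeasurableSpace W] {μ : Measure X} {ν : Measure Y} {ω : Measure W}
    {f : PMP G W ω} {g : PMP G Y ν} (h : CRLaw f g) (e : X ≃ᵐ Y) (he : MeasurePreserving e μ ν) :
    CRLaw f (CRtransport g e he) := by
  intro n C hC F ε hε
  obtain ⟨D, hD, hDE⟩ := h n (C ∘ e.symm) (hC.comp e.symm.measurable) F ε hε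
  refine ⟨D, hD, fun E => ?_⟩
  have := hDE E
  rw [← CR_real_preimage e he] at this
  exact this

lemma CRLaw.transport_left {G : Type*} [Group G] {X Y W : Type*} [MeasurableSpace X]
    [MeasurableSpace Y] [MeasurableSpace W] {μ : Measure X} {ν : Measure Y} {ω : Measure W}
    {f : PMP G W ω} {g : PMP G Y ν} (h : CRLaw g f) (e : X ≃ᵐ Y) (he : MeasurePreserving e μ ν) :
    CRLaw (CRtransport g e he) f := by
  intro n C hC F ε hε
  obtain ⟨D, hD, hDE⟩ := h n C hC F ε hε
  refine ⟨D ∘ e, hD.comp e.measurable, fun E => ?_⟩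
  have := hDE E
  rw [← CR_real_preimage e he] at this
  convert this using 5
  simp [CRtransport]

lemma CR_proper_transport {G : Type*} [Group G] {X Y : Type*} [MeasurableSpace X]
    [MeasurableSpace Y] {μ : Measure X} {ν : Measure Y}
    {g : PMP G Y ν} (e : X ≃ᵐ Y) (he : MeasurePreserving e μ ν)
    (S : Finset G) {r k : ℕ} (L : Set (cayleyBall S r → Fin k))
    (hL : ProperlySatisfies g S L) : ProperlySatisfies (CRtransport g e he) S L := by
  obtain ⟨φ, hφ, h⟩ := hL
  refine ⟨φ ∘ e, hφ.comp e.measurable, ?_⟩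
  rw [← he.measure_preimage_equiv] at h
  rw [← h]
  congr 1
  ext x
  change (fun γ : cayleyBall S r => φ (e (e.symm (g.act γ (e x))))) ∈ L ↔
    (fun γ : cayleyBall S r => φ (g.act γ (e x))) ∈ L
  simp

end Law

section Finite

lemma CR_finite {Γ X : Type} [Group Γ] [Finite Γ] (S : Finset Γ)
    [MeasurableSpace X] [StandardBorelSpace X]
    (μ : Measure X) [IsProbabilityMeasure μ]
    (f : PMP Γ X μ) (hfree : IsFreeAction f) {r k : ℕ} (L : Set (cayleyBall S r → Fin k))
    (hL : AlmostSatisfies f S L) : ProperlySatisfies f S L := by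
  classical
  cases nonempty_fintype Γ
  have hfin := CR_ball_finite S r
  have : Finite (cayleyBall S r) := hfin
  -- find a good orbit
  obtain ⟨c, hc⟩ : ∃ c : Γ → Fin k, ∀ δ : Γ, (fun γ : cayleyBall S r => c (γ.1 * δ)) ∈ L := by
    have hpos : (0:ℝ) < 1 / (Fintype.card Γ + 1) := by positivity
    obtain ⟨φ, hφ, hφL⟩ := hL _ hpos
    have hmeas : MeasurableSet {x | ballColoring f S r k φ x ∈ L} := by
      have : Measurable (ballColoring f S r k φ) :=
        measurable_pi_lambda _ fun γ => hφ.comp (f.measurable _)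
      exact this (Set.toFinite L).measurableSet
    set A := {x | ballColoring f S r k φ x ∈ L} with hA
    have hAc : μ.real Aᶜ ≤ 1 / (Fintype.card Γ + 1) := by
      rw [probReal_compl_eq_one_sub hmeas]
      have : 1 - 1 / ((Fintype.card Γ : ℝ) + 1) ≤ μ.real A := hφL
      linarith
    have hU : μ.real (⋃ γ : Γ, f.act γ ⁻¹' Aᶜ) < 1 := by
      calc μ.real (⋃ γ : Γ, f.act γ ⁻¹' Aᶜ) ≤ ∑ γ : Γ, μ.real (f.act γ ⁻¹' Aᶜ) :=
            measureReal_iUnion_fintype_le _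
        _ = ∑ γ : Γ, μ.real Aᶜ := by
            refine Finset.sum_congr rfl fun γ _ => ?_
            rw [Measure.real, (f.preserves γ).measure_preimage hmeas.compl.nullMeasurableSet]; rfl
        _ = Fintype.card Γ * μ.real Aᶜ := by simp
        _ ≤ Fintype.card Γ * (1 / (Fintype.card Γ + 1)) := by gcongr
        _ < 1 := by
            rw [mul_one_div, div_lt_one (by positivity)]; linarith
    have : ∃ x, x ∉ ⋃ γ : Γ, f.act γ ⁻¹' Aᶜ := by
      by_contra! h
      rw [Set.eq_univ_of_forall h] at hU
      simp at hU
    obtain ⟨x, hx⟩ := this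
    refine ⟨fun γ => φ (f.act γ x), fun δ => ?_⟩
    have : f.act δ x ∈ A := by
      by_contra h
      exact hx (Set.mem_iUnion.2 ⟨δ, h⟩)
    simp only [f.act_mul]
    exact this
  obtain ⟨t, ht⟩ := exists_measurableEmbedding_real X
  let T : Set X := {x | ∀ γ, t x ≤ t (f.act γ x)}
  have hT : MeasurableSet T := by
    have : T = ⋂ γ, {x | t x ≤ t (f.act γ x)} := by ext; simp [T]
    rw [this]
    exact MeasurableSet.iInter fun γ =>
      measurableSet_le ht.measurable (ht.measurable.comp (f.measurable γ))
  let pick : (Γ → Bool) → Γ := fun s => if h : ∃ δ, s δ = true then h.choose else 1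
  let code : X → Γ → Bool := fun x δ => decide (f.act δ⁻¹ x ∈ T)
  have hcode : Measurable code := by
    refine measurable_pi_lambda _ fun δ => ?_
    refine measurable_to_bool ?_
    have : (fun x => code x δ) ⁻¹' {true} = f.act δ⁻¹ ⁻¹' T := by
      ext x; simp [code]
    rw [this]
    exact f.measurable _ hT
  have hpick : ∀ x, (∃ δ, f.act δ⁻¹ x ∈ T) → f.act (pick (code x))⁻¹ x ∈ T := by
    intro x hx
    have h : ∃ δ, code x δ = true := by simpa [code] using hx
    have h2 := h.choose_spec
    have h3 : pick (code x) = h.choose := dif_pos h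
    rw [h3]
    simpa [code] using h2
  have hexT : ∀ x, ∃ δ, f.act δ⁻¹ x ∈ T := by
    intro x
    obtain ⟨δ, hδ⟩ := Finite.exists_min (fun δ => t (f.act δ x))
    refine ⟨δ⁻¹, fun γ => ?_⟩
    rw [inv_inv, ← f.act_mul]
    exact hδ _
  refine ⟨fun x => c (pick (code x)), (measurable_of_finite (c ∘ pick)).comp hcode, ?_⟩
  have huniq : ∀ x, ∀ a b : Γ, f.act a x ∈ T → f.act b x ∈ T → f.act a x = f.act b x := by
    intro x a b ha hb
    apply ht.injective
    apply le_antisymm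
    · have := ha (b * a⁻¹)
      rwa [← f.act_mul, inv_mul_cancel_right] at this
    · have := hb (a * b⁻¹)
      rwa [← f.act_mul, inv_mul_cancel_right] at this
  have hae : ∀ᵐ x ∂μ, x ∈ {x | ballColoring f S r k (fun x => c (pick (code x))) x ∈ L} := by
    filter_upwards [hfree] with x hx
    have key : ∀ γ, pick (code (f.act γ x)) = γ * pick (code x) := by
      intro γ
      have h1 := hpick x (hexT x)
      have h2 := hpick (f.act γ x) (hexT _)
      rw [← f.act_mul] at h2
      have h3 := huniq x _ _ h1 h2
      have h4 := congrArg (f.act (pick (code x))) h3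
      rw [f.act_act_inv, ← f.act_mul] at h4
      have h5 := hx _ h4.symm
      rw [mul_eq_one_iff_inv_eq, eq_comm, inv_mul_eq_iff_eq_mul] at h5
      exact mul_inv_eq_iff_eq_mul.1 h5.symm
    change (fun γ : cayleyBall S r => c (pick (code (f.act γ x)))) ∈ L
    simp only [key]
    exact hc _
  rw [← measure_univ (μ := μ)]
  exact measure_congr (eventuallyEq_univ.2 hae)

end Finite

section Limit

set_option linter.unusedSectionVars false

lemma CR_generate_clopen (K : Type*) [TopologicalSpace K] [CompactSpace K] [T2Space K]
    [TotallyDisconnectedSpace K] [SecondCountableTopology K] [mK : MeasurableSpace K]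
    [BorelSpace K] : mK = MeasurableSpace.generateFrom {s : Set K | IsClopen s} := by
  rw [BorelSpace.measurable_eq (α := K)]
  exact isTopologicalBasis_isClopen.borel_eq_generateFrom

lemma CR_ext_clopen {K : Type*} [TopologicalSpace K] [CompactSpace K] [T2Space K]
    [TotallyDisconnectedSpace K] [SecondCountableTopology K] [MeasurableSpace K]
    [BorelSpace K] (μ ν : Measure K) [IsProbabilityMeasure μ] [IsProbabilityMeasure ν]
    (h : ∀ s, IsClopen s → μ s = ν s) : μ = ν := by
  refine ext_of_generate_finite _ (CR_generate_clopen K) ?_ (fun s hs => h s hs) (by simp)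
  intro s hs t ht _
  exact IsClopen.inter hs ht

lemma CR_approx_set {K : Type*} [TopologicalSpace K] [CompactSpace K] [T2Space K]
    [TotallyDisconnectedSpace K] [SecondCountableTopology K] [MeasurableSpace K]
    [BorelSpace K] (ν : Measure K) [IsProbabilityMeasure ν] {s : Set K} (hs : MeasurableSet s)
    {ε : ℝ} (hε : 0 < ε) : ∃ t, IsClopen t ∧ ν.real (symmDiff t s) ≤ ε := by
  obtain ⟨t, ht, h⟩ := exists_measure_symmDiff_lt_of_generateFrom_isSetRing (μ := ν)
    (C := {s : Set K | IsClopen s})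
    ⟨isClopen_empty, fun _ _ h h' => IsClopen.union h h', fun _ _ h h' => IsClopen.diff h h'⟩
    ⟨{Set.univ}, Set.countable_singleton _, by simpa using isClopen_univ, by simp⟩
    (CR_generate_clopen K) hs (ENNReal.ofReal_pos.2 hε)
  exact ⟨t, ht, ENNReal.toReal_le_of_le_ofReal hε.le h.le⟩

lemma CR_approx {K : Type*} [TopologicalSpace K] [CompactSpace K] [T2Space K]
    [TotallyDisconnectedSpace K] [SecondCountableTopology K] [MeasurableSpace K]
    [BorelSpace K] (ν : Measure K) [IsProbabilityMeasure ν] {n : ℕ} (C : K → Fin n)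
    (hC : Measurable C) {ε : ℝ} (hε : 0 < ε) :
    ∃ C' : K → Fin n, Continuous C' ∧ ν.real {y | C' y ≠ C y} ≤ ε := by
  classical
  obtain ⟨y0⟩ : Nonempty K := nonempty_of_isProbabilityMeasure ν
  have hn : (0:ℝ) < n := by exact_mod_cast (Fin.pos (C y0))
  choose A hA hAν using fun i : Fin n => CR_approx_set ν (hC (measurableSet_singleton i))
    (ε := ε / n) (by positivity)
  let pick : (Fin n → Bool) → Fin n := fun s => if h : ∃ δ, s δ = true then h.choose else C y0
  let code : K → Fin n → Bool := fun x δ => decide (x ∈ A δ)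
  have hcode : Continuous code := continuous_pi fun i => by
    have := (hA i)
    rw [← continuous_boolIndicator_iff_isClopen] at this
    convert this using 1
    ext x
    simp [code, Set.boolIndicator]
  refine ⟨pick ∘ code, (continuous_of_discreteTopology).comp hcode, ?_⟩
  calc ν.real {y | (pick ∘ code) y ≠ C y} ≤ ν.real (⋃ i, symmDiff (A i) (C ⁻¹' {i})) := by
        refine measureReal_mono ?_
        intro y hy
        by_contra hc
        apply hy
        have hiff : ∀ i, y ∈ A i ↔ C y = i := by
          intro i
          by_contra h
          apply hc
          refine Set.mem_iUnion.2 ⟨i, ?_⟩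
          rw [Set.mem_symmDiff, Set.mem_preimage, Set.mem_singleton_iff]
          tauto
        have h : ∃ δ, code y δ = true := ⟨C y, by simp [code, hiff]⟩
        have h2 := h.choose_spec
        have h3 : pick (code y) = h.choose := dif_pos h
        change pick (code y) = C y
        rw [h3]
        exact ((hiff _).1 (of_decide_eq_true h2)).symm
    _ ≤ ∑ i, ν.real (symmDiff (A i) (C ⁻¹' {i})) := measureReal_iUnion_fintype_le _
    _ ≤ ∑ i : Fin n, ε / n := Finset.sum_le_sum fun i _ => hAν i
    _ = ε := by
        simp; field_simp

variable {Γ X Z : Type} [Group Γ] [Countable Γ] [MeasurableSpace X]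
    [TopologicalSpace Z] [CompactSpace Z] [T2Space Z]
    [TotallyDisconnectedSpace Z] [SecondCountableTopology Z] [MeasurableSpace Z]
    [BorelSpace Z] {μ : Measure X} [IsProbabilityMeasure μ]

/-- The shift. -/
def CRshift (δ : Γ) (y : Γ → Z) : Γ → Z := fun γ => y (γ * δ)

/-- The factor map. -/
def CRfactor (f : PMP Γ X μ) (Ψ : X → Z) (x : X) : Γ → Z := fun γ => Ψ (f.act γ x)

lemma CRfactor_equiv (f : PMP Γ X μ) (Ψ : X → Z) (δ : Γ) (x : X) :
    CRfactor f Ψ (f.act δ x) = CRshift δ (CRfactor f Ψ x) := by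
  ext γ
  simp [CRfactor, CRshift, f.act_mul]

lemma CRfactor_meas (f : PMP Γ X μ) (Ψ : X → Z) (hΨ : Measurable Ψ) :
    Measurable (CRfactor f Ψ) :=
  measurable_pi_lambda _ fun γ => hΨ.comp (f.measurable γ)

lemma CRshift_cont (δ : Γ) : Continuous (CRshift (Z := Z) δ) :=
  continuous_pi fun γ => continuous_apply (γ * δ)

lemma CR_limit (f : PMP Γ X μ) (Ψ : ℕ → X → Z) (hΨ : ∀ n, Measurable (Ψ n)) :
    ∃ (ν : Measure (Γ → Z)) (g : PMP Γ (Γ → Z) ν) (U : Ultrafilter ℕ),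
      IsProbabilityMeasure ν ∧ (∀ γ, g.act γ = CRshift γ) ∧ (U : Filter ℕ) ≤ atTop ∧
      ∀ s : Set (Γ → Z), IsClopen s →
        Tendsto (fun n => μ.real (CRfactor f (Ψ n) ⁻¹' s)) U (𝓝 (ν.real s)) := by
  have : TopologicalSpace.MetrizableSpace Z :=
    TopologicalSpace.metrizableSpace_of_t3_secondCountable Z
  have hm := fun n => CRfactor_meas f (Ψ n) (hΨ n)
  let νs : ℕ → ProbabilityMeasure (Γ → Z) := fun n =>
    ⟨μ.map (CRfactor f (Ψ n)), Measure.isProbabilityMeasure_map (hm n).aemeasurable⟩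
  let U : Ultrafilter ℕ := Filter.hyperfilter ℕ
  obtain ⟨ν, hν⟩ : ∃ ν, Tendsto νs U (𝓝 ν) := by
    obtain ⟨ν, -, h⟩ := isCompact_univ.ultrafilter_le_nhds (U.map νs) (by simp)
    exact ⟨ν, h⟩
  have hlim : ∀ s : Set (Γ → Z), IsClopen s →
      Tendsto (fun n => μ.real (CRfactor f (Ψ n) ⁻¹' s)) U (𝓝 ((ν : Measure (Γ → Z)).real s)) := by
    intro s hs
    have h1 := ProbabilityMeasure.tendsto_measure_of_null_frontier_of_tendsto' hν (E := s)
      (by rw [hs.frontier_eq]; simp)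
    have h2 := (ENNReal.tendsto_toReal (measure_ne_top (ν : Measure (Γ → Z)) s)).comp h1
    refine h2.congr fun n => ?_
    simp only [Function.comp, νs, ProbabilityMeasure.coe_mk, Measure.real]
    rw [Measure.map_apply (hm n) hs.isOpen.measurableSet]
  have hinv : ∀ δ : Γ, MeasurePreserving (CRshift (Z := Z) δ) (ν : Measure (Γ → Z)) ν := by
    intro δ
    have hsm : Measurable (CRshift (Z := Z) δ) := (CRshift_cont δ).measurable
    refine ⟨hsm, ?_⟩
    have : IsProbabilityMeasure ((ν : Measure (Γ → Z)).map (CRshift (Z := Z) δ)) :=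
      Measure.isProbabilityMeasure_map hsm.aemeasurable
    refine CR_ext_clopen _ _ fun s hs => ?_
    rw [Measure.map_apply hsm hs.isOpen.measurableSet]
    have h1 := hlim s hs
    have h2 := hlim _ (hs.preimage (CRshift_cont δ))
    have h3 : ∀ n, μ.real (CRfactor f (Ψ n) ⁻¹' (CRshift δ ⁻¹' s))
        = μ.real (CRfactor f (Ψ n) ⁻¹' s) := by
      intro n
      have : CRfactor f (Ψ n) ⁻¹' (CRshift δ ⁻¹' s)
          = f.act δ ⁻¹' (CRfactor f (Ψ n) ⁻¹' s) := by
        ext x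
        simp only [Set.mem_preimage, CRfactor_equiv]
      rw [this, Measure.real, (f.preserves δ).measure_preimage
        ((hm n) hs.isOpen.measurableSet).nullMeasurableSet]
      rfl
    simp only [h3] at h2
    have h4 := tendsto_nhds_unique h2 h1
    rwa [Measure.real, Measure.real, ENNReal.toReal_eq_toReal_iff'
      (measure_ne_top _ _) (measure_ne_top _ _)] at h4
  refine ⟨ν, ⟨CRshift, fun γ => (CRshift_cont γ).measurable, hinv, ?_, ?_⟩, U, inferInstance,
    fun _ => rfl, ?_, hlim⟩
  · intro x; ext γ; simp [CRshift]
  · intro a b x; ext γ; simp [CRshift, mul_assoc]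
  · exact Nat.hyperfilter_le_atTop

lemma CR_law_limit (f : PMP Γ X μ) (Ψ : ℕ → X → Z) (hΨ : ∀ n, Measurable (Ψ n))
    {ν : Measure (Γ → Z)} [IsProbabilityMeasure ν] (g : PMP Γ (Γ → Z) ν) (U : Ultrafilter ℕ)
    (hg : ∀ γ, g.act γ = CRshift γ)
    (hlim : ∀ s : Set (Γ → Z), IsClopen s →
        Tendsto (fun n => μ.real (CRfactor f (Ψ n) ⁻¹' s)) U (𝓝 (ν.real s))) :
    CRLaw f g := by
  intro n C hC F ε hε
  obtain ⟨C', hC', hCC⟩ := CR_approx ν C hC (ε := ε / 2 / (F.card + 1)) (by positivity)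
  have hcl : ∀ E : Set (F → Fin n), IsClopen {y | (fun γ : F => C' (g.act γ y)) ∈ E} := by
    intro E
    have : Continuous (fun y => (fun γ : F => C' (g.act γ y))) :=
      continuous_pi fun γ => by rw [hg]; exact hC'.comp (CRshift_cont _)
    exact (isClopen_discrete E).preimage this
  have hev : ∀ᶠ m in (U : Filter ℕ), ∀ E : Set (F → Fin n),
      |μ.real (CRfactor f (Ψ m) ⁻¹' {y | (fun γ : F => C' (g.act γ y)) ∈ E}) -
        ν.real {y | (fun γ : F => C' (g.act γ y)) ∈ E}| ≤ ε / 2 := by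
    rw [Filter.eventually_all]
    intro E
    have := (hlim _ (hcl E)).eventually (Metric.closedBall_mem_nhds _ (half_pos hε))
    filter_upwards [this] with m hm
    rwa [Real.dist_eq] at hm
  obtain ⟨m, hm⟩ := hev.exists
  refine ⟨C' ∘ CRfactor f (Ψ m), hC'.measurable.comp (CRfactor_meas f _ (hΨ m)), fun E => ?_⟩
  have h1 := hm E
  have h2 : CRfactor f (Ψ m) ⁻¹' {y | (fun γ : F => C' (g.act γ y)) ∈ E} =
      {x | (fun γ : F => (C' ∘ CRfactor f (Ψ m)) (f.act γ x)) ∈ E} := by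
    ext x
    change (fun γ : F => C' (g.act γ (CRfactor f (Ψ m) x))) ∈ E ↔
      (fun γ : F => C' (CRfactor f (Ψ m) (f.act γ x))) ∈ E
    simp only [CRfactor_equiv, hg]
  rw [h2] at h1
  have h3 : |ν.real {y | (fun γ : F => C' (g.act γ y)) ∈ E} -
      ν.real {y | (fun γ : F => C (g.act γ y)) ∈ E}| ≤ ε / 2 := by
    have hmC : MeasurableSet {y | (fun γ : F => C (g.act γ y)) ∈ E} := by
      have : Measurable (fun y => (fun γ : F => C (g.act γ y))) :=
        measurable_pi_lambda _ fun γ => hC.comp (g.measurable _)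
      exact this (Set.toFinite E).measurableSet
    have hbad : MeasurableSet {y | C' y ≠ C y} :=
      (measurableSet_eq_fun hC'.measurable hC).compl
    calc _ ≤ ν.real (symmDiff {y | (fun γ : F => C' (g.act γ y)) ∈ E}
            {y | (fun γ : F => C (g.act γ y)) ∈ E}) :=
          abs_measureReal_sub_le_measureReal_symmDiff (hcl E).isOpen.measurableSet.nullMeasurableSet
            hmC.nullMeasurableSet
      _ ≤ ν.real (⋃ γ : F, g.act γ ⁻¹' {y | C' y ≠ C y}) := by
          refine measureReal_mono ?_
          intro y hy
          by_contra hc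
          have : ∀ γ : F, C' (g.act γ y) = C (g.act γ y) := by
            intro γ
            by_contra h
            exact hc (Set.mem_iUnion.2 ⟨γ, h⟩)
          rw [Set.mem_symmDiff] at hy
          simp only [Set.mem_ofPred_eq, this] at hy
          tauto
      _ ≤ ∑ γ : F, ν.real (g.act γ ⁻¹' {y | C' y ≠ C y}) := measureReal_iUnion_fintype_le _
      _ = ∑ γ : F, ν.real {y | C' y ≠ C y} := by
          refine Finset.sum_congr rfl fun γ _ => ?_
          rw [Measure.real, (g.preserves γ).measure_preimage hbad.nullMeasurableSet]; rfl
      _ = F.card * ν.real {y | C' y ≠ C y} := by simp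
      _ ≤ F.card * (ε / 2 / (F.card + 1)) := by gcongr
      _ ≤ ε / 2 := by
          rw [mul_div_assoc', div_le_iff₀ (by positivity)]
          nlinarith
  calc _ ≤ _ := abs_sub_le _ (ν.real {y | (fun γ : F => C' (g.act γ y)) ∈ E}) _
    _ ≤ ε / 2 + ε / 2 := add_le_add h1 h3
    _ = ε := by ring

end Limit

section Main

lemma CR_noAtoms {Γ X : Type} [Group Γ] [Infinite Γ] [MeasurableSpace X]
    [MeasurableSingletonClass X]
    (μ : Measure X) [IsProbabilityMeasure μ] (f : PMP Γ X μ) (hfree : IsFreeAction f) :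
    NullSingletonClass μ := by
  refine ⟨fun x => ?_⟩
  by_contra hx
  have hpos : 0 < μ {x} := pos_iff_ne_zero.2 hx
  have hfx : ∀ γ : Γ, f.act γ x = x → γ = 1 := by
    by_contra h
    have h0 : μ {x | ¬ ∀ γ : Γ, f.act γ x = x → γ = 1} = 0 := hfree
    exact hx (measure_mono_null (Set.singleton_subset_iff.2 h) h0)
  have hinj : ∀ γ, Function.Injective (f.act γ) := fun γ =>
    Function.LeftInverse.injective (f.act_inv_act γ)
  have hm : ∀ γ, μ {f.act γ x} = μ {x} := by
    intro γ
    rw [← (f.preserves γ).measure_preimage (measurableSet_singleton _).nullMeasurableSet]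
    congr 1
    ext y
    simp [(hinj γ).eq_iff]
  have hfin := Measure.finite_const_le_meas_of_disjoint_iUnion μ hpos
    (As := fun γ : Γ => {f.act γ x}) (fun γ => measurableSet_singleton _) (by
      intro a b hab
      simp only [Function.onFun, Set.disjoint_singleton]
      intro h
      apply hab
      have h2 := congrArg (f.act b⁻¹) h
      rw [f.act_inv_act, ← f.act_mul] at h2
      exact (inv_mul_eq_one.1 (hfx _ h2)).symm) (measure_ne_top _ _)
  have : {γ : Γ | μ {x} ≤ μ {f.act γ x}} = Set.univ := by
    ext γ; simp [hm]
  rw [this] at hfin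
  exact Set.infinite_univ hfin

/-- The rules almost satisfied by `f`. -/
abbrev CRRules {Γ X : Type} [Group Γ] (S : Finset Γ) [MeasurableSpace X] {μ : Measure X}
    (f : PMP Γ X μ) : Type :=
  {p : Σ r : ℕ, Σ k : ℕ, Set (cayleyBall S r → Fin k) // AlmostSatisfies f S p.2.2}

/-- The alphabet. -/
abbrev CRAlph {Γ X : Type} [Group Γ] (S : Finset Γ) [MeasurableSpace X] {μ : Measure X}
    (f : PMP Γ X μ) : Type :=
  (ℕ → Bool) × (∀ p : CRRules S f, Fin p.1.2.1)

lemma CR_infinite {Γ X : Type} [Group Γ] [Countable Γ] [Infinite Γ] (S : Finset Γ)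
    [MeasurableSpace X] [StandardBorelSpace X]
    (μ : Measure X) [IsProbabilityMeasure μ]
    (f : PMP Γ X μ) (hfree : IsFreeAction f) :
    ∃ g : PMP Γ X μ, WeaklyEquivalent f g ∧
      ∀ r k : ℕ, ∀ L : Set (cayleyBall S r → Fin k),
        AlmostSatisfies g S L → ProperlySatisfies g S L := by
  have hna := CR_noAtoms μ f hfree
  have hball : ∀ r, Finite (cayleyBall S r) := fun r => CR_ball_finite S r
  have hcount : Countable (CRRules S f) := inferInstance
  obtain ⟨ψ, hψm, hψi⟩ := MeasurableSpace.measurable_injection_nat_bool_of_countablySeparated X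
  have hψ : MeasurableEmbedding ψ := hψm.measurableEmbedding hψi
  have hpos : ∀ n : ℕ, (0:ℝ) < 1 / (n + 1) := fun n => by positivity
  choose φ hφ using fun (n : ℕ) (p : CRRules S f) => p.2 (1 / (n + 1)) (hpos n)
  let Ψ : ℕ → X → CRAlph S f := fun n x => (ψ x, fun p => φ n p x)
  have hΨ : ∀ n, Measurable (Ψ n) := fun n =>
    hψm.prodMk (measurable_pi_lambda _ fun p => (hφ n p).1)
  obtain ⟨ν, g, U, hν, hg, hU, hlim⟩ := CR_limit f Ψ hΨ
  have hlaw1 : CRLaw f g := CR_law_limit f Ψ hΨ g U hg hlim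
  -- the marginal
  let π : (Γ → CRAlph S f) → (Γ → ℕ → Bool) := fun y γ => (y γ).1
  have hπc : Continuous π := continuous_pi fun γ => continuous_fst.comp (continuous_apply γ)
  have hπ : ν.map π = μ.map (CRfactor f ψ) := by
    have h1 : IsProbabilityMeasure (ν.map π) :=
      Measure.isProbabilityMeasure_map hπc.measurable.aemeasurable
    have hfm := CRfactor_meas f ψ hψm
    have h2 : IsProbabilityMeasure (μ.map (CRfactor f ψ)) :=
      Measure.isProbabilityMeasure_map hfm.aemeasurable
    refine CR_ext_clopen _ _ fun s hs => ?_
    rw [Measure.map_apply hπc.measurable hs.isOpen.measurableSet,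
      Measure.map_apply hfm hs.isOpen.measurableSet]
    have h3 := hlim _ (hs.preimage hπc)
    have h4 : ∀ n, μ.real (CRfactor f (Ψ n) ⁻¹' (π ⁻¹' s)) = μ.real (CRfactor f ψ ⁻¹' s) :=
      fun n => rfl
    simp only [h4] at h3
    have h5 := tendsto_nhds_unique h3 tendsto_const_nhds
    rwa [Measure.real, Measure.real, ENNReal.toReal_eq_toReal_iff'
      (measure_ne_top _ _) (measure_ne_top _ _)] at h5
  have hlaw2 : CRLaw g f := by
    intro n C hC F ε hε
    obtain ⟨x0⟩ : Nonempty X := nonempty_of_isProbabilityMeasure μ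
    obtain ⟨C', hC', hCC⟩ := hψ.exists_measurable_extend hC (fun _ => ⟨C x0⟩)
    refine ⟨fun y => C' (y 1).1, hC'.comp (measurable_fst.comp (measurable_pi_apply 1)),
      fun E => ?_⟩
    have hmE : MeasurableSet {z : Γ → ℕ → Bool | (fun γ : F => C' (z γ)) ∈ E} := by
      have : Measurable (fun z : Γ → ℕ → Bool => (fun γ : F => C' (z γ))) :=
        measurable_pi_lambda _ fun γ => hC'.comp (measurable_pi_apply _)
      exact this (Set.toFinite E).measurableSet
    have h1 := congrArg (fun m => m {z : Γ → ℕ → Bool | (fun γ : F => C' (z γ)) ∈ E}) hπ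
    rw [Measure.map_apply hπc.measurable hmE,
      Measure.map_apply (CRfactor_meas f ψ hψm) hmE] at h1
    have h2 : {y | (fun γ : F => (fun y : Γ → CRAlph S f => C' (y 1).1) (g.act γ y)) ∈ E} =
        π ⁻¹' {z : Γ → ℕ → Bool | (fun γ : F => C' (z γ)) ∈ E} := by
      ext y
      simp [hg, CRshift, π]
    have h3 : {x | (fun γ : F => C (f.act γ x)) ∈ E} =
        CRfactor f ψ ⁻¹' {z : Γ → ℕ → Bool | (fun γ : F => C' (z γ)) ∈ E} := by
      ext x
      simp [CRfactor, ← hCC]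
    rw [h2, h3, Measure.real, Measure.real, h1, sub_self, abs_zero]
    exact hε.le
  have hnaν : NullSingletonClass ν := by
    refine ⟨fun y => ?_⟩
    have h1 : ν {y} ≤ ν (π ⁻¹' ((fun z : Γ → ℕ → Bool => z 1) ⁻¹' {(y 1).1})) := by
      apply measure_mono
      rintro _ rfl
      rfl
    have hms : MeasurableSet ((fun z : Γ → ℕ → Bool => z 1) ⁻¹' {(y 1).1}) :=
      (measurable_pi_apply 1) (measurableSet_singleton _)
    rw [← Measure.map_apply hπc.measurable hms, hπ,
      Measure.map_apply (CRfactor_meas f ψ hψm) hms] at h1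
    refine le_antisymm (h1.trans ?_) zero_le
    refine le_of_eq (Set.Subsingleton.measure_zero ?_ μ)
    intro a ha b hb
    have ha : ψ (f.act 1 a) = (y 1).1 := ha
    have hb : ψ (f.act 1 b) = (y 1).1 := hb
    rw [f.act_one] at ha hb
    exact hψi (ha.trans hb.symm)
  have hprop : ∀ r k : ℕ, ∀ L : Set (cayleyBall S r → Fin k),
      AlmostSatisfies f S L → ProperlySatisfies g S L := by
    intro r k L hL
    let p : CRRules S f := ⟨⟨r, k, L⟩, hL⟩
    refine ⟨fun y => (y 1).2 p,
      (measurable_pi_apply p).comp (measurable_snd.comp (measurable_pi_apply 1)), ?_⟩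
    let A : Set (Γ → CRAlph S f) :=
      {y | (fun γ : cayleyBall S r => ((y γ).2 p : Fin k)) ∈ L}
    have hA : {y | ballColoring g S r k (fun y => (y 1).2 p) y ∈ L} = A := by
      ext y
      change (fun γ : cayleyBall S r => ((g.act γ y 1).2 p : Fin k)) ∈ L ↔ _
      simp [hg, CRshift, A]
    have hAc : IsClopen A := by
      have : Continuous (fun y : Γ → CRAlph S f =>
          (fun γ : cayleyBall S r => ((y γ).2 p : Fin k))) :=
        continuous_pi fun γ => (continuous_apply p).comp (continuous_snd.comp (continuous_apply _))
      exact (isClopen_discrete L).preimage this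
    have h1 := hlim A hAc
    have h2 : ∀ n : ℕ, 1 - 1 / ((n:ℝ) + 1) ≤ μ.real (CRfactor f (Ψ n) ⁻¹' A) :=
      fun n => (hφ n p).2
    have h3 : Tendsto (fun n : ℕ => 1 - 1 / ((n:ℝ) + 1)) U (𝓝 (1 - 0)) :=
      (tendsto_const_nhds.sub tendsto_one_div_add_atTop_nhds_zero_nat).mono_left hU
    have h4 : 1 ≤ ν.real A := by
      have := le_of_tendsto_of_tendsto' h3 h1 h2
      linarith
    rw [hA]
    refine le_antisymm prob_le_one ?_
    rw [Measure.real, ← ENNReal.toReal_one] at h4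
    exact (ENNReal.toReal_le_toReal ENNReal.one_ne_top (measure_ne_top _ _)).1 h4
  obtain ⟨e, he⟩ := CR_iso μ ν
  refine ⟨CRtransport g e he, ⟨(hlaw1.transport_right e he).weaklyContains,
    (hlaw2.transport_left e he).weaklyContains⟩, fun r k L hL => ?_⟩
  exact CR_proper_transport e he S L
    (hprop r k L ((hlaw1.transport_right e he).almostSatisfies S L hL))

end Main

theorem exists_combinatorially_rigid_weakly_equivalent
    {Γ X : Type} [Group Γ] [Countable Γ] (S : Finset Γ)
    (hS : Subgroup.closure (S : Set Γ) = ⊤)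
    [MeasurableSpace X] [StandardBorelSpace X]
    (μ : Measure X) [IsProbabilityMeasure μ]
    (f : PMP Γ X μ) (hfree : IsFreeAction f) :
    ∃ g : PMP Γ X μ, WeaklyEquivalent f g ∧
      ∀ r k : ℕ, 1 ≤ r → 1 ≤ k → ∀ L : Set (cayleyBall S r → Fin k),
        AlmostSatisfies g S L → ProperlySatisfies g S L := by
  rcases finite_or_infinite Γ with hΓ | hΓ
  · have hrefl : WeaklyContains f f := fun n _ C hC F ε hε =>
      ⟨C, hC, fun i j γ _ => by rw [sub_self, abs_zero]; exact hε.le⟩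
    exact ⟨f, ⟨hrefl, hrefl⟩, fun r k _ _ L hL => CR_finite S μ f hfree L hL⟩
  · obtain ⟨g, hg, h⟩ := CR_infinite S μ f hfree
    exact ⟨g, hg, fun r k _ _ L hL => h r k L hL⟩
end
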